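/- Let G be a path graph on vertices p_1, ..., p_n (or a cycle), and let I, I', I_t be independent sets of G such that G[I △ I'] is connected and nonempty. Then cc(I' △ I_t) ≥ cc(I △ I_t) − 1, where cc(S) denotes the number of connected components of G[S]. -/

import Mathlib

/-- A set of vertices is independent: no two of its vertices are adjacent. -/
def IsIndep {V : Type*} (G : SimpleGraph V) (I : Set V) : Prop :=
  ∀ ⦃a⦄, a ∈ I → ∀ ⦃b⦄, b ∈ I → ¬ G.Adj a b

/-- The number of connected components of the subgraph induced by `S`. -/
noncomputable def cc {V : Type*} (G : SimpleGraph V) (S : Set V) : ℕ :=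
  Nat.card (G.induce S).ConnectedComponent

/-!
Going once around a cycle, one leaves a set of vertices `S` once for every component of `S`, unless
`S` is the whole cycle, and one enters it equally often. So twice the number of components is the
number of boundary edges. The boundary of `S ∆ T` is the symmetric difference of the boundaries of
`S` and `T`, hence `cc (S ∆ T) ≤ cc S + cc T`; this is trivial when `S ∆ T` is the whole cycle. A
path is an induced subgraph of a cycle and inherits the inequality. Apply it to
`I ∆ I_t = (I' ∆ I_t) ∆ (I ∆ I')`, where the last set has one component.
-/

open Function Set SimpleGraph
open scoped symmDiff

section Exits

variable {α : Type*}

/-- The points of `S` at which the orbits of `f` leave `S`. On a cycle oriented by its successor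
map `f`, these are the last points of the arcs that make up `S`. -/
def exits (f : α → α) (S : Set α) : Set α :=
  S \ f ⁻¹' S

variable [Finite α] {f : α → α}

theorem two_mul_ncard_exits (hf : Injective f) (S : Set α) :
    2 * (exits f S).ncard = (S ∆ (f ⁻¹' S)).ncard := by
  have hpreimage : S.ncard = (f ⁻¹' S).ncard :=
    (ncard_preimage_of_injective_subset_range hf
      ((Finite.surjective_of_injective hf).range_eq ▸ subset_univ S)).symm
  have hentries : (S \ f ⁻¹' S).ncard = (f ⁻¹' S \ S).ncard :=
    (ncard_eq_ncard_iff_ncard_sdiff_eq_ncard_sdiff).1 hpreimage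
  rw [exits, Set.symmDiff_def, ncard_union_eq disjoint_sdiff_sdiff, ← hentries, two_mul]

theorem ncard_symmDiff_le (S T : Set α) : (S ∆ T).ncard ≤ S.ncard + T.ncard :=
  (ncard_le_ncard symmDiff_le_sup).trans (ncard_union_le S T)

theorem ncard_exits_symmDiff_le (hf : Injective f) (S T : Set α) :
    (exits f (S ∆ T)).ncard ≤ (exits f S).ncard + (exits f T).ncard := by
  refine Nat.le_of_mul_le_mul_left ?_ two_pos
  calc 2 * (exits f (S ∆ T)).ncard
      = ((S ∆ (f ⁻¹' S)) ∆ (T ∆ (f ⁻¹' T))).ncard := by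
        rw [two_mul_ncard_exits hf, preimage_symmDiff, symmDiff_symmDiff_symmDiff_comm]
    _ ≤ (S ∆ (f ⁻¹' S)).ncard + (T ∆ (f ⁻¹' T)).ncard := ncard_symmDiff_le _ _
    _ = 2 * ((exits f S).ncard + (exits f T).ncard) := by
        rw [← two_mul_ncard_exits hf, ← two_mul_ncard_exits hf, mul_add]

end Exits

section FunctionalGraph

variable {V : Type*} (f : V → V) (S : Set V)

/-- The functional graph of `f`, in which every `a` is joined to `f a`; the orientation and the
loops at fixed points are forgotten. -/
def functionalGraph : SimpleGraph V :=
  SimpleGraph.fromRel fun a b => f a = b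

/-- The component of `S` in the functional graph of `f` to which an exit belongs. Comparing exits
with components through this map is what relates `exits` to `cc`. -/
def exitComponent (i : exits f S) : ((functionalGraph f).induce S).ConnectedComponent :=
  connectedComponentMk _ ⟨i, i.2.1⟩

variable {f S}

theorem functionalGraph_adj {a b : V} :
    (functionalGraph f).Adj a b ↔ a ≠ b ∧ (f a = b ∨ f b = a) :=
  fromRel_adj _ a b

theorem reachable_functionalGraph_apply {a : V} (ha : a ∈ S) (hfa : f a ∈ S) :
    ((functionalGraph f).induce S).Reachable ⟨a, ha⟩ ⟨f a, hfa⟩ := by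
  by_cases h : a = f a
  · rw [show (⟨a, ha⟩ : S) = ⟨f a, hfa⟩ from Subtype.ext h]
  · exact Adj.reachable (functionalGraph_adj.2 ⟨h, Or.inl rfl⟩)

/-- Since the forward step out of a vertex is unique, backtracking cancels: a walk that ends at an
exit can be replaced by one that only moves forward. -/
theorem reflTransGen_apply_of_reachable_exit {i j : S} (hi : f i ∉ S)
    (h : ((functionalGraph f).induce S).Reachable i j) :
    Relation.ReflTransGen (fun a b : S => f a = b) j i := by
  rw [reachable_iff_reflTransGen] at h
  induction h with
  | refl => exact .refl
  | @tail b c _ hbc forward =>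
    obtain hforth | hback : f b = c ∨ f c = b := (functionalGraph_adj.1 hbc).2
    · obtain rfl | ⟨b', hb', forward'⟩ := forward.cases_head
      · exact absurd (hforth ▸ c.2) hi
      · rwa [Subtype.ext (hforth.symm.trans hb')]
    · exact forward.head hback

theorem exitComponent_injective : Injective (exitComponent f S) := by
  intro i j hij
  obtain hji | ⟨k, hjk, -⟩ :=
    (reflTransGen_apply_of_reachable_exit i.2.2 (ConnectedComponent.exact hij)).cases_head
  · exact Subtype.ext (congrArg Subtype.val hji).symm
  · exact absurd (mem_of_eq_of_mem hjk k.2) j.2.2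

theorem exitComponent_surjective (hS : ∀ C ⊆ S, C.Nonempty → ¬ MapsTo f C C) :
    Surjective (exitComponent f S) := by
  intro c
  induction c using ConnectedComponent.ind with | _ j
  by_contra hc
  refine hS {x | ∃ hx : x ∈ S, ((functionalGraph f).induce S).Reachable j ⟨x, hx⟩}
    (fun x hx => hx.1) ⟨j, j.2, .rfl⟩ ?_
  rintro x ⟨hx, hjx⟩
  by_cases hfx : f x ∈ S
  · exact ⟨hfx, hjx.trans (reachable_functionalGraph_apply hx hfx)⟩
  · exact absurd ⟨⟨x, hx, hfx⟩, ConnectedComponent.sound hjx.symm⟩ hc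

variable [Finite V]

theorem ncard_exits_le_cc : (exits f S).ncard ≤ cc (functionalGraph f) S :=
  Nat.card_le_card_of_injective _ exitComponent_injective

theorem cc_le_ncard_exits (hS : ∀ C ⊆ S, C.Nonempty → ¬ MapsTo f C C) :
    cc (functionalGraph f) S ≤ (exits f S).ncard :=
  Nat.card_le_card_of_surjective _ (exitComponent_surjective hS)

theorem cc_functionalGraph_symmDiff_le (hf : Injective f) {S T : Set V}
    (hST : ∀ C ⊆ S ∆ T, C.Nonempty → ¬ MapsTo f C C) :
    cc (functionalGraph f) (S ∆ T) ≤ cc (functionalGraph f) S + cc (functionalGraph f) T :=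
  calc cc (functionalGraph f) (S ∆ T)
      ≤ (exits f (S ∆ T)).ncard := cc_le_ncard_exits hST
    _ ≤ (exits f S).ncard + (exits f T).ncard := ncard_exits_symmDiff_le hf S T
    _ ≤ cc (functionalGraph f) S + cc (functionalGraph f) T :=
        add_le_add ncard_exits_le_cc ncard_exits_le_cc

end FunctionalGraph

section ComponentCount

variable {V W : Type*} {G : SimpleGraph V} {H : SimpleGraph W} {S : Set V}

theorem cc_eq_one_of_connected (h : (G.induce S).Connected) : cc G S = 1 :=
  Nat.card_eq_one_iff_unique.2 ⟨h.preconnected.subsingleton_connectedComponent,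
    h.nonempty.map (G.induce S).connectedComponentMk⟩

theorem cc_pos [Finite V] (hS : S.Nonempty) : 0 < cc G S :=
  Nat.card_pos_iff.2 ⟨hS.to_subtype.map (G.induce S).connectedComponentMk, inferInstance⟩

theorem cc_image (e : G ↪g H) (S : Set V) : cc H (e '' S) = cc G S :=
  Nat.card_congr (Iso.connectedComponentEquiv
    { toEquiv := Equiv.Set.image e S e.injective, map_rel_iff' := by simp }).symm

end ComponentCount

theorem cycleGraph_eq_functionalGraph (n : ℕ) :
    cycleGraph (n + 1) = functionalGraph fun i : Fin (n + 1) => i + 1 := by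
  ext a b
  simp [functionalGraph_adj, cycleGraph_eq_circulantGraph, sub_eq_iff_eq_add, add_comm, eq_comm,
    or_comm]

theorem eq_univ_of_mapsTo_add_one {n : ℕ} {C : Set (Fin (n + 1))} (hC : C.Nonempty)
    (h : MapsTo (· + 1) C C) : C = univ := by
  obtain ⟨j, hj⟩ := hC
  have hshift (k : Fin (n + 1)) : j + k ∈ C := by
    induction k using Fin.induction with
    | zero => rwa [add_zero]
    | succ k ih =>
      rw [← Fin.coeSucc_eq_succ, ← add_assoc]
      exact h ih
  exact eq_univ_of_forall fun x => add_sub_cancel j x ▸ hshift (x - j)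

theorem cc_cycleGraph_symmDiff_le {n : ℕ} (S T : Set (Fin n)) :
    cc (cycleGraph n) (S ∆ T) ≤ cc (cycleGraph n) S + cc (cycleGraph n) T := by
  cases n with
  | zero => simp [cc]
  | succ n =>
    by_cases hST : S ∆ T = univ
    · have hcc : cc (cycleGraph (n + 1)) (S ∆ T) = 1 :=
        cc_eq_one_of_connected (hST ▸ (induceUnivIso _).connected_iff.2 cycleGraph_connected)
      obtain ⟨h, -⟩ | ⟨h, -⟩ : (0 : Fin (n + 1)) ∈ S ∆ T := hST ▸ mem_univ 0
      · exact hcc.trans_le (le_add_right (cc_pos ⟨0, h⟩))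
      · exact hcc.trans_le (le_add_left (cc_pos ⟨0, h⟩))
    · rw [cycleGraph_eq_functionalGraph]
      exact cc_functionalGraph_symmDiff_le (add_left_injective 1) fun C hCST hC hmaps =>
        hST (univ_subset_iff.1 (eq_univ_of_mapsTo_add_one hC hmaps ▸ hCST))

/-- The path on `n` vertices as the cycle on `n + 1` vertices with the last vertex removed. -/
def pathGraphEmbeddingCycleGraph (n : ℕ) : pathGraph n ↪g cycleGraph (n + 1) where
  toEmbedding := Fin.castSuccEmb
  map_rel_iff' {a b} := by
    simp only [cycleGraph_eq_functionalGraph, functionalGraph_adj, pathGraph_adj,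
      Fin.coe_castSuccEmb, ne_eq, ← Fin.val_inj, Fin.coeSucc_eq_succ, Fin.val_succ,
      Fin.val_castSucc]
    lia

theorem cc_pathGraph_symmDiff_le {n : ℕ} (S T : Set (Fin n)) :
    cc (pathGraph n) (S ∆ T) ≤ cc (pathGraph n) S + cc (pathGraph n) T := by
  let e := pathGraphEmbeddingCycleGraph n
  simpa only [← image_symmDiff e.injective, cc_image] using
    cc_cycleGraph_symmDiff_le (e '' S) (e '' T)

theorem stmt_8_general {n : ℕ} (G : SimpleGraph (Fin n))
    (hG : G = SimpleGraph.pathGraph n ∨ G = SimpleGraph.cycleGraph n) (I I' I_t : Set (Fin n)) :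
    cc G (I ∆ I_t) ≤ cc G (I' ∆ I_t) + cc G (I ∆ I') := by
  have hsymm : I ∆ I_t = (I' ∆ I_t) ∆ (I ∆ I') := by
    rw [symmDiff_comm (I' ∆ I_t), symmDiff_assoc, symmDiff_symmDiff_cancel_left]
  rw [hsymm]
  rcases hG with rfl | rfl
  · exact cc_pathGraph_symmDiff_le _ _
  · exact cc_cycleGraph_symmDiff_le _ _

/-- On a path or a cycle, a single flip (a step to an adjacent independent set) decreases
the number of connected components of the symmetric difference with the target by at
most one: `cc(I' ∆ I_t) ≥ cc(I ∆ I_t) - 1`. -/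
theorem stmt_8 {n : ℕ} (G : SimpleGraph (Fin n))
    (hG : G = SimpleGraph.pathGraph n ∨ G = SimpleGraph.cycleGraph n)
    (I I' I_t : Set (Fin n))
    (hI : IsIndep G I) (hI' : IsIndep G I') (hIt : IsIndep G I_t)
    (hconn : (G.induce (symmDiff I I')).Connected) :
    cc G (symmDiff I I_t) ≤ cc G (symmDiff I' I_t) + 1 := by
  simpa only [cc_eq_one_of_connected hconn] using stmt_8_general G hG I I' I_t
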